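/- Let n, r ∈ ℕ with r ≥ 1, let λ : ℕ → ℝ with λ_j ≥ 0 for all j, suppose that for every t > 0 the series θ(t) := Σ_j exp(−t λ_j) converges, and let a : ℕ → ℝ be such that for every N ∈ ℕ there is C_N ≥ 0 with |θ(t) − Σ_{j=0}^{N−1} a_j t^{(j−n)/r}| ≤ C_N · t^{(N−n)/r} for all t ∈ (0, 1]. Let k be the (necessarily finite) number of indices j with λ_j = 0, and set a'_j := a_j for j ≠ n and a'_n := a_n − k. Then: (i) for every z ∈ ℂ with Re(z) > n/r the series ζ(z) := Σ_{j : λ_j > 0} λ_j^{−z} converges absolutely, and ζ is differentiable (holomorphic) on {z : Re(z) > n/r}; (ii) there exists F : ℂ → ℂ, differentiable on ℂ \ {(n−j)/r : j ∈ ℕ}, agreeing with ζ on {z : Re(z) > n/r}, such that for every j ∈ ℕ, (z − (n−j)/r)·F(z) tends to a'_j/Γ((n−j)/r) as z → (n−j)/r within z ≠ (n−j)/r, where 1/Γ is the entire reciprocal Gamma function (so this limit is 0 when (n−j)/r is a non-positive integer); (iii) for every l ∈ ℕ, the function equal to F away from −l and to (−1)^l·l!·a'_{n+r·l} at −l is analytic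 at −l. -/

import Mathlib

open MeasureTheory Filter

/-!
The Mellin transform turns the heat trace of a positive sequence into a Dirichlet series,
`∫₀^∞ t^(z-1) Σ e^(-tλ_j) dt = Γ(z) ζ(z)`. Splitting off `N` terms of the expansion at `t = 0`,
cut off to `(0, 1]`, leaves a remainder whose transform is holomorphic on a half-plane that grows
with `N`, while a term `t^α b` cut off to `(0, 1]` contributes exactly the simple pole
`b / (z + α)`. Dividing by `Γ` gives the continuation of `ζ`; at a non-positive integer `-l` the
simple zero of `1/Γ`, with derivative `(-1)^l l!`, cancels the pole and produces the special value.
Zero eigenvalues contribute a constant to the heat trace, which only changes the coefficient of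
`t^0`.
-/


section PowerExpansion

open Set Topology Asymptotics

variable {E : Type*} [NormedAddCommGroup E] [NormedSpace ℝ E]

/-- The asymptotic expansion `f t ~ ∑ j, t ^ α j • b j` as `t → 0⁺`, with every truncation error
bounded by the first omitted power. -/
def HasPowerExpansion (f : ℝ → E) (α : ℕ → ℝ) (b : ℕ → E) : Prop :=
  ∀ N : ℕ, (fun t ↦ f t - ∑ j ∈ Finset.range N, t ^ α j • b j) =O[𝓝[>] 0] (· ^ α N)

namespace HasPowerExpansion

variable {f g : ℝ → E} {α : ℕ → ℝ} {b c : ℕ → E}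

lemma of_norm_le
    (h : ∀ N, ∃ C, ∀ t ∈ Ioc (0 : ℝ) 1, ‖f t - ∑ j ∈ Finset.range N, t ^ α j • b j‖ ≤ C * t ^ α N) :
    HasPowerExpansion f α b := fun N ↦ by
  obtain ⟨C, hC⟩ := h N
  refine IsBigO.of_bound C ?_
  filter_upwards [Ioc_mem_nhdsGT one_pos] with t ht
  simpa only [Real.norm_of_nonneg (Real.rpow_nonneg ht.1.le _)] using hC t ht

lemma sub (hf : HasPowerExpansion f α b) (hg : HasPowerExpansion g α c) :
    HasPowerExpansion (fun t ↦ f t - g t) α (b - c) := fun N ↦ by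
  simpa only [Pi.sub_apply, smul_sub, Finset.sum_sub_distrib, sub_sub_sub_comm]
    using (hf N).sub (hg N)

lemma congr' (hf : HasPowerExpansion f α b) (hfg : ∀ t, 0 < t → f t = g t) :
    HasPowerExpansion g α b := fun N ↦ by
  refine (hf N).congr' ?_ .rfl
  filter_upwards [self_mem_nhdsWithin] with t ht
  rw [hfg t ht]

lemma const {n : ℕ} (hα : Monotone α) (hn : α n = 0) (x : E) :
    HasPowerExpansion (fun _ ↦ x) α (Pi.single n x) := fun N ↦ by
  have hsum (t : ℝ) : ∑ j ∈ Finset.range N, t ^ α j • Pi.single (M := fun _ ↦ E) n x j =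
      if n < N then x else 0 := by
    simp [Pi.single_apply, hn]
  simp only [hsum]
  split_ifs with hN
  · simpa only [sub_self] using isBigO_zero _ _
  · refine IsBigO.of_bound ‖x‖ ?_
    filter_upwards [Ioc_mem_nhdsGT one_pos] with t ht
    have hpow : 1 ≤ t ^ α N :=
      Real.one_le_rpow_of_pos_of_le_one_of_nonpos ht.1 ht.2 (hn ▸ hα (not_lt.1 hN))
    rw [sub_zero, Real.norm_of_nonneg (zero_le_one.trans hpow)]
    exact le_mul_of_one_le_right (norm_nonneg x) hpow

lemma sub_const {n : ℕ} {x : E} (hf : HasPowerExpansion f α b) (hα : Monotone α) (hn : α n = 0)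
    (hc : ∀ j, j ≠ n → c j = b j) (hcn : c n = b n - x) :
    HasPowerExpansion (fun t ↦ f t - x) α c := by
  have hc_eq : c = b - Pi.single n x := by
    funext j
    rcases eq_or_ne j n with rfl | hj
    · simp [hcn]
    · simp [hc j hj, hj]
  exact hc_eq ▸ hf.sub (.const hα hn x)

lemma ofReal {f : ℝ → ℝ} {b : ℕ → ℝ} (hf : HasPowerExpansion f α b) :
    HasPowerExpansion (fun t ↦ (f t : ℂ)) α (fun j ↦ (b j : ℂ)) := fun N ↦ by
  simpa using Complex.isBigO_ofReal_left.2 (hf N)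

end HasPowerExpansion

end PowerExpansion

section Mellin

open Set Topology Asymptotics

variable {E : Type*} [NormedAddCommGroup E] [NormedSpace ℂ E]

lemma hasMellin_smul_const [CompleteSpace E] {φ : ℝ → ℂ} {s m : ℂ} (h : HasMellin φ s m) (x : E) :
    HasMellin (fun t ↦ φ t • x) s (m • x) := by
  obtain ⟨hconv, rfl⟩ := h
  simp only [HasMellin, MellinConvergent, mellin, ← smul_assoc]
  exact ⟨Integrable.smul_const hconv x, integral_smul_const _ x⟩

/-- The function `f` minus the first `N` terms of its expansion, the latter cut off to `(0, 1]`. -/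
noncomputable def truncatedRemainder (f : ℝ → E) (α : ℕ → ℝ) (b : ℕ → E) (N : ℕ) (t : ℝ) : E :=
  f t - ∑ j ∈ Finset.range N, (Ioc 0 1).indicator (fun u : ℝ ↦ (u : ℂ) ^ (α j : ℂ)) t • b j

lemma truncatedRemainder_zero (f : ℝ → E) (α : ℕ → ℝ) (b : ℕ → E) :
    truncatedRemainder f α b 0 = f := by
  funext t
  simp [truncatedRemainder]

/-- The Mellin transform of `f`, computed on `{z | -α N < z.re}` by splitting off `N` terms of the
expansion of `f` at `0`. -/
noncomputable def mellinSplit (f : ℝ → E) (α : ℕ → ℝ) (b : ℕ → E) (N : ℕ) (z : ℂ) : E :=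
  mellin (truncatedRemainder f α b N) z + ∑ j ∈ Finset.range N, (1 / (z + α j)) • b j

/-- The meromorphic continuation of the Mellin transform of `f`: at `z`, split off the least number
`N` of terms for which `-α N < z.re`. -/
noncomputable def mellinContinuation (f : ℝ → E) (α : ℕ → ℝ) (b : ℕ → E) (z : ℂ) : E :=
  mellinSplit f α b (sInf {N | -α N < z.re}) z

/-- The conditions on `f` under which its Mellin transform continues meromorphically: local
integrability on `(0, ∞)`, rapid decay at `∞`, and a power expansion at `0`. -/
structure MellinContinuable (f : ℝ → E) (α : ℕ → ℝ) (b : ℕ → E) : Prop where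
  locallyIntegrableOn : LocallyIntegrableOn f (Ioi 0)
  isBigO_atTop (A : ℝ) : f =O[atTop] (· ^ A)
  expansion : HasPowerExpansion f α b

lemma eventually_lt_re {x : ℝ} {z : ℂ} (hz : x < z.re) : ∀ᶠ w in 𝓝 z, x < w.re :=
  Complex.continuous_re.continuousAt.eventually_const_lt hz

lemma tendsto_sub_smul_add_one_div_smul {H : ℂ → E} {p : ℂ} (hH : ContinuousAt H p) (x : E) :
    Tendsto (fun z ↦ (z - p) • (H z + (1 / (z - p)) • x)) (𝓝[≠] p) (𝓝 x) := by
  have hlim : Tendsto (fun z ↦ (z - p) • H z + x) (𝓝 p) (𝓝 x) := by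
    have hcont : ContinuousAt (fun z ↦ (z - p) • H z + x) p := by fun_prop
    simpa only [ContinuousAt, sub_self, zero_smul, zero_add] using hcont
  refine (hlim.mono_left nhdsWithin_le_nhds).congr' ?_
  filter_upwards [self_mem_nhdsWithin] with z hz
  rw [smul_add, smul_smul, mul_one_div_cancel (sub_ne_zero.2 hz), one_smul]

namespace MellinContinuable

variable {f : ℝ → E} {α : ℕ → ℝ} {b : ℕ → E}

lemma locallyIntegrableOn_truncatedRemainder (h : MellinContinuable f α b) (N : ℕ) :
    LocallyIntegrableOn (truncatedRemainder f α b N) (Ioi 0) := by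
  rw [locallyIntegrableOn_iff isOpen_Ioi.isLocallyClosed]
  intro K hK hKc
  refine (h.locallyIntegrableOn.integrableOn_compact_subset hK hKc).sub
    (integrable_finsetSum _ fun j _ ↦ Integrable.smul_const
      (Integrable.indicator ?_ measurableSet_Ioc) _)
  refine ContinuousOn.integrableOn_compact hKc fun t ht ↦ ContinuousAt.continuousWithinAt ?_
  exact Complex.continuousAt_ofReal_cpow_const _ _ (Or.inr (hK ht).ne')

lemma truncatedRemainder_isBigO_atTop (h : MellinContinuable f α b) (N : ℕ) (A : ℝ) :
    truncatedRemainder f α b N =O[atTop] (· ^ A) := by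
  refine (h.isBigO_atTop A).congr' ?_ .rfl
  filter_upwards [eventually_gt_atTop 1] with t ht
  have ht' : t ∉ Ioc (0 : ℝ) 1 := fun h ↦ h.2.not_gt ht
  simp [truncatedRemainder, indicator_of_notMem ht']

lemma truncatedRemainder_isBigO_zero (h : MellinContinuable f α b) (N : ℕ) :
    truncatedRemainder f α b N =O[𝓝[>] 0] (· ^ α N) := by
  refine (h.expansion N).congr' ?_ .rfl
  filter_upwards [Ioc_mem_nhdsGT one_pos] with t ht
  simp [truncatedRemainder, indicator_of_mem ht, ← Complex.ofReal_cpow ht.1.le]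

lemma mellinConvergent_truncatedRemainder (h : MellinContinuable f α b) {N : ℕ} {z : ℂ}
    (hz : -α N < z.re) : MellinConvergent (truncatedRemainder f α b N) z :=
  mellinConvergent_of_isBigO_rpow (h.locallyIntegrableOn_truncatedRemainder N)
    (h.truncatedRemainder_isBigO_atTop N _) (lt_add_one _)
    (by simpa only [neg_neg] using h.truncatedRemainder_isBigO_zero N) hz

lemma differentiableAt_mellin_truncatedRemainder (h : MellinContinuable f α b) {N : ℕ} {z : ℂ}
    (hz : -α N < z.re) : DifferentiableAt ℂ (mellin (truncatedRemainder f α b N)) z :=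
  mellin_differentiableAt_of_isBigO_rpow (h.locallyIntegrableOn_truncatedRemainder N)
    (h.truncatedRemainder_isBigO_atTop N _) (lt_add_one _)
    (by simpa only [neg_neg] using h.truncatedRemainder_isBigO_zero N) hz

lemma mellinConvergent (h : MellinContinuable f α b) {z : ℂ} (hz : -α 0 < z.re) :
    MellinConvergent f z := by
  simpa only [truncatedRemainder_zero] using h.mellinConvergent_truncatedRemainder hz

lemma differentiableAt_mellin_add_sum (h : MellinContinuable f α b) {N : ℕ} {s : Finset ℕ} {z : ℂ}
    (hz : -α N < z.re) (hs : ∀ j ∈ s, z ≠ -α j) :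
    DifferentiableAt ℂ (fun w ↦ mellin (truncatedRemainder f α b N) w +
      ∑ j ∈ s, (1 / (w + α j)) • b j) z := by
  refine (h.differentiableAt_mellin_truncatedRemainder hz).add
    (DifferentiableAt.fun_sum fun j hj ↦ DifferentiableAt.smul_const ?_ _)
  have hne : z + α j ≠ 0 := fun h0 ↦ hs j hj (eq_neg_of_add_eq_zero_left h0)
  fun_prop (disch := exact hne)

variable [CompleteSpace E]

lemma mellinSplit_succ (h : MellinContinuable f α b) (hα : Monotone α) {N : ℕ} {z : ℂ}
    (hz : -α N < z.re) : mellinSplit f α b (N + 1) z = mellinSplit f α b N z := by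
  have hz' : -α (N + 1) < z.re := (neg_le_neg (hα N.le_succ)).trans_lt hz
  have hterm := hasMellin_smul_const
    (hasMellin_cpow_Ioc (α N) (s := z) (by rw [Complex.ofReal_re]; linarith)) (b N)
  have hsplit : truncatedRemainder f α b N = fun t ↦ truncatedRemainder f α b (N + 1) t +
      (Ioc 0 1).indicator (fun u : ℝ ↦ (u : ℂ) ^ (α N : ℂ)) t • b N := by
    funext t
    simp only [truncatedRemainder, Finset.sum_range_succ]
    abel
  simp only [mellinSplit, Finset.sum_range_succ]
  rw [hsplit, (hasMellin_add (h.mellinConvergent_truncatedRemainder hz') hterm.1).2, hterm.2]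
  abel

lemma mellinSplit_eq_of_le (h : MellinContinuable f α b) (hα : Monotone α) {N M : ℕ}
    (hNM : N ≤ M) {z : ℂ} (hz : -α N < z.re) : mellinSplit f α b M z = mellinSplit f α b N z := by
  induction M, hNM using Nat.le_induction with
  | base => rfl
  | succ M hM ih => exact (h.mellinSplit_succ hα ((neg_le_neg (hα hM)).trans_lt hz)).trans ih

lemma mellinContinuation_eq_mellinSplit (h : MellinContinuable f α b) (hα : Monotone α) {N : ℕ}
    {z : ℂ} (hz : -α N < z.re) : mellinContinuation f α b z = mellinSplit f α b N z :=
  (h.mellinSplit_eq_of_le hα (Nat.sInf_le hz)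
    (Nat.sInf_mem (s := {N | -α N < z.re}) ⟨N, hz⟩)).symm

lemma mellinContinuation_eventuallyEq (h : MellinContinuable f α b) (hα : Monotone α) {N : ℕ}
    {z : ℂ} (hz : -α N < z.re) : mellinContinuation f α b =ᶠ[𝓝 z] mellinSplit f α b N :=
  (eventually_lt_re hz).mono fun _ ↦ h.mellinContinuation_eq_mellinSplit hα

lemma mellinContinuation_eq_mellin (h : MellinContinuable f α b) (hα : Monotone α) {z : ℂ}
    (hz : -α 0 < z.re) : mellinContinuation f α b z = mellin f z := by
  simp [h.mellinContinuation_eq_mellinSplit hα hz, mellinSplit, truncatedRemainder_zero]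

theorem differentiableAt_mellinContinuation (h : MellinContinuable f α b) (hα : Monotone α)
    {N : ℕ} {z : ℂ} (hz : -α N < z.re) (hne : ∀ j < N, z ≠ -α j) :
    DifferentiableAt ℂ (mellinContinuation f α b) z :=
  (h.differentiableAt_mellin_add_sum hz fun j hj ↦
    hne j (Finset.mem_range.1 hj)).congr_of_eventuallyEq (h.mellinContinuation_eventuallyEq hα hz)

theorem eventually_differentiableAt_mellinContinuation (h : MellinContinuable f α b)
    (hα : Monotone α) {N : ℕ} {z : ℂ} (hz : -α N < z.re) :
    ∀ᶠ w in 𝓝[≠] z, DifferentiableAt ℂ (mellinContinuation f α b) w := by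
  have hpoles : {w : ℂ | ∃ j < N, w = -α j}.Finite := by
    have := (Set.finite_lt_nat N).image fun j ↦ (-α j : ℂ)
    exact this.subset fun w ⟨j, hj, hw⟩ ↦ ⟨j, hj, hw.symm⟩
  filter_upwards [nhdsNE_le_cofinite z hpoles.compl_mem_cofinite,
    nhdsWithin_le_nhds (eventually_lt_re hz)] with w hw hwN
  exact h.differentiableAt_mellinContinuation hα hwN fun j hj hwj ↦ hw ⟨j, hj, hwj⟩

theorem tendsto_add_smul_mellinContinuation (h : MellinContinuable f α b) (hα : StrictMono α)
    (j : ℕ) :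
    Tendsto (fun z : ℂ ↦ (z + α j) • mellinContinuation f α b z) (𝓝[≠] (-α j)) (𝓝 (b j)) := by
  have hj : -α (j + 1) < (-α j : ℂ).re := by simpa using hα j.lt_succ_self
  have hreg := h.differentiableAt_mellin_add_sum (s := Finset.range j) hj fun i hi ↦ by
    simpa [hα.injective.eq_iff] using (Finset.mem_range.1 hi).ne'
  refine (tendsto_sub_smul_add_one_div_smul hreg.continuousAt (b j)).congr' ?_
  filter_upwards [nhdsWithin_le_nhds (h.mellinContinuation_eventuallyEq hα.monotone hj)] with z hz
  simp only [hz, mellinSplit, Finset.sum_range_succ, sub_neg_eq_add, add_assoc]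

end MellinContinuable

end Mellin

section InvGamma

open Set Topology Nat

lemma hasDerivAt_inv_Gamma_neg_nat (l : ℕ) :
    HasDerivAt (fun z : ℂ ↦ (Complex.Gamma z)⁻¹) ((-1) ^ l * l !) (-l) := by
  have hrec := funext Complex.one_div_Gamma_eq_self_mul_one_div_Gamma_add_one
  rw [hrec]
  induction l with
  | zero =>
    have hd : DifferentiableAt ℂ (fun z : ℂ ↦ (Complex.Gamma (z + 1))⁻¹) (-(0 : ℕ)) :=
      (Complex.differentiable_one_div_Gamma _).comp _ (by fun_prop)
    convert! (hasDerivAt_id _).mul hd.hasDerivAt using 1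
    simp
  | succ l ih =>
    rw [← hrec] at ih
    have hshift : (-(l + 1 : ℕ) : ℂ) + 1 = -l := by push_cast; ring
    have hd := HasDerivAt.comp_add_const (-(l + 1 : ℕ) : ℂ) 1 (hshift ▸ ih)
    convert! (hasDerivAt_id _).mul hd using 1
    simp only [hshift, Complex.Gamma_neg_nat_eq_zero, id, factorial_succ]
    push_cast
    ring

lemma tendsto_inv_Gamma_div_add_nat (l : ℕ) :
    Tendsto (fun z : ℂ ↦ (Complex.Gamma z)⁻¹ / (z + l)) (𝓝[≠] (-l)) (𝓝 ((-1) ^ l * l !)) := by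
  refine (hasDerivAt_iff_tendsto_slope.1 (hasDerivAt_inv_Gamma_neg_nat l)).congr fun z ↦ ?_
  simp [slope_def_field, Complex.Gamma_neg_nat_eq_zero]

variable {E : Type*} [NormedAddCommGroup E] [NormedSpace ℂ E]

/-- The Mellin transform of `f` divided by `Γ`, continued meromorphically. For the heat trace of a
positive sequence this is the spectral zeta function. -/
noncomputable def zetaContinuation (f : ℝ → E) (α : ℕ → ℝ) (b : ℕ → E) (z : ℂ) : E :=
  (Complex.Gamma z)⁻¹ • mellinContinuation f α b z

namespace MellinContinuable

variable [CompleteSpace E] {f : ℝ → E} {α : ℕ → ℝ} {b : ℕ → E}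

theorem differentiableAt_zetaContinuation (h : MellinContinuable f α b) (hα : Monotone α)
    {N : ℕ} {z : ℂ} (hz : -α N < z.re) (hne : ∀ j < N, z ≠ -α j) :
    DifferentiableAt ℂ (zetaContinuation f α b) z :=
  (Complex.differentiable_one_div_Gamma z).smul (h.differentiableAt_mellinContinuation hα hz hne)

theorem tendsto_add_smul_zetaContinuation (h : MellinContinuable f α b) (hα : StrictMono α)
    (j : ℕ) :
    Tendsto (fun z : ℂ ↦ (z + α j) • zetaContinuation f α b z) (𝓝[≠] (-α j))
      (𝓝 ((Complex.Gamma (-α j))⁻¹ • b j)) := by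
  have hΓ := (Complex.differentiable_one_div_Gamma (-α j)).continuousAt.tendsto.mono_left
    (nhdsWithin_le_nhds (s := {(-α j : ℂ)}ᶜ))
  exact (hΓ.smul (h.tendsto_add_smul_mellinContinuation hα j)).congr fun z ↦ smul_comm ..

theorem tendsto_zetaContinuation_neg_nat (h : MellinContinuable f α b) (hα : StrictMono α)
    {l m : ℕ} (hl : α m = l) :
    Tendsto (zetaContinuation f α b) (𝓝[≠] (-l)) (𝓝 (((-1 : ℂ) ^ l * l !) • b m)) := by
  have hpole := h.tendsto_add_smul_mellinContinuation hα m
  rw [hl, Complex.ofReal_natCast] at hpole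
  refine ((tendsto_inv_Gamma_div_add_nat l).smul hpole).congr' ?_
  filter_upwards [self_mem_nhdsWithin] with z hz
  have hz' : z + l ≠ 0 := fun h0 ↦ hz (eq_neg_of_add_eq_zero_left h0)
  rw [smul_smul, div_mul_cancel₀ _ hz', zetaContinuation]

theorem analyticAt_update_zetaContinuation_neg_nat
    (h : MellinContinuable f α b) (hα : StrictMono α) {l m : ℕ} (hl : α m = l) :
    AnalyticAt ℂ (Function.update (zetaContinuation f α b) (-l) (((-1 : ℂ) ^ l * l !) • b m))
      (-l) := by
  refine Complex.analyticAt_of_differentiable_on_punctured_nhds_of_continuousAt ?_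
    (continuousAt_update_same.2 (h.tendsto_zetaContinuation_neg_nat hα hl))
  have hm : -α (m + 1) < (-l : ℂ).re := by simpa [← hl] using hα m.lt_succ_self
  filter_upwards [h.eventually_differentiableAt_mellinContinuation hα.monotone hm,
    eventually_nhdsNE_eventually_nhds_iff.2 (Function.update_eventuallyEq_nhdsNE _ _ _ _)]
    with z hz heq
  exact ((Complex.differentiable_one_div_Gamma z).smul hz).congr_of_eventuallyEq heq

end MellinContinuable

end InvGamma

section HeatTrace

open Set Topology Asymptotics

variable {ι : Type*}

/-- The heat trace `∑ j, exp (-t * lam j)` of an operator with eigenvalues `lam`. -/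
noncomputable def heatTrace (lam : ι → ℝ) (t : ℝ) : ℝ :=
  ∑' j, Real.exp (-t * lam j)

lemma tendsto_cofinite_atTop_of_summable_exp {lam : ι → ℝ} {t : ℝ} (ht : 0 < t)
    (hsum : Summable fun j ↦ Real.exp (-t * lam j)) : Tendsto lam cofinite atTop := by
  have h := Real.tendsto_exp_comp_nhds_zero.1 hsum.tendsto_cofinite_zero
  simpa only [neg_mul, tendsto_neg_atBot_iff, tendsto_const_mul_atTop_of_pos ht] using h

section Positive

variable {lam : ι → ℝ}

lemma exists_pos_forall_le_of_tendsto_cofinite (hlam : ∀ j, 0 < lam j)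
    (hlim : Tendsto lam cofinite atTop) : ∃ c > 0, ∀ j, c ≤ lam j := by
  rcases isEmpty_or_nonempty ι with _ | _
  · exact ⟨1, one_pos, isEmptyElim⟩
  · obtain ⟨m, hm⟩ := hlim.exists_forall_le
    exact ⟨lam m, hlam m, hm⟩

lemma heatTrace_antitoneOn (hlam : ∀ j, 0 ≤ lam j)
    (hsum : ∀ t : ℝ, 0 < t → Summable fun j ↦ Real.exp (-t * lam j)) :
    AntitoneOn (heatTrace lam) (Ioi 0) := fun s hs t ht hst ↦
  (hsum t ht).tsum_le_tsum (fun j ↦ Real.exp_le_exp.2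
    (mul_le_mul_of_nonneg_right (neg_le_neg hst) (hlam j))) (hsum s hs)

lemma heatTrace_nonneg (lam : ι → ℝ) (t : ℝ) : 0 ≤ heatTrace lam t :=
  tsum_nonneg fun _ ↦ (Real.exp_pos _).le

lemma heatTrace_isBigO_exp {c : ℝ} (hc : ∀ j, c ≤ lam j)
    (hsum : ∀ t : ℝ, 0 < t → Summable fun j ↦ Real.exp (-t * lam j)) :
    heatTrace lam =O[atTop] fun t ↦ Real.exp (-c * t) := by
  refine IsBigO.of_bound (heatTrace lam 1 * Real.exp c) ?_
  filter_upwards [eventually_ge_atTop 1] with t ht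
  rw [Real.norm_of_nonneg (heatTrace_nonneg lam t),
    Real.norm_of_nonneg (Real.exp_pos _).le, mul_assoc, ← Real.exp_add, heatTrace, heatTrace,
    ← tsum_mul_right]
  refine (hsum t (by linarith)).tsum_le_tsum (fun j ↦ ?_) ((hsum 1 one_pos).mul_right _)
  rw [← Real.exp_add, Real.exp_le_exp]
  linarith [mul_le_mul_of_nonneg_right (hc j) (sub_nonneg.2 ht)]

lemma heatTrace_isBigO_rpow (hlam : ∀ j, 0 < lam j)
    (hsum : ∀ t : ℝ, 0 < t → Summable fun j ↦ Real.exp (-t * lam j)) (A : ℝ) :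
    heatTrace lam =O[atTop] (· ^ A) := by
  obtain ⟨c, hc, hle⟩ := exists_pos_forall_le_of_tendsto_cofinite hlam
    (tendsto_cofinite_atTop_of_summable_exp one_pos (hsum 1 one_pos))
  exact (heatTrace_isBigO_exp hle hsum).trans (isLittleO_exp_neg_mul_rpow_atTop hc A).isBigO

lemma mellinContinuable_heatTrace (hlam : ∀ j, 0 < lam j)
    (hsum : ∀ t : ℝ, 0 < t → Summable fun j ↦ Real.exp (-t * lam j))
    {α b : ℕ → ℝ} (hexp : HasPowerExpansion (heatTrace lam) α b) :
    MellinContinuable (fun t ↦ (heatTrace lam t : ℂ)) α (fun j ↦ (b j : ℂ)) where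
  locallyIntegrableOn := by
    rw [locallyIntegrableOn_iff isOpen_Ioi.isLocallyClosed]
    exact fun K hK hKc ↦ (((heatTrace_antitoneOn (fun j ↦ (hlam j).le) hsum).mono
      hK).integrableOn_isCompact hKc).ofReal
  isBigO_atTop A := Complex.isBigO_ofReal_left.2 (heatTrace_isBigO_rpow hlam hsum A)
  expansion := hexp.ofReal

lemma integrableOn_rpow_mul_heatTrace {z : ℂ}
    (hconv : MellinConvergent (fun t ↦ (heatTrace lam t : ℂ)) z) :
    IntegrableOn (fun t ↦ t ^ (z.re - 1) * heatTrace lam t) (Ioi 0) := by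
  refine IntegrableOn.congr_fun hconv.norm (fun t ht ↦ ?_) measurableSet_Ioi
  simp [Complex.norm_cpow_eq_rpow_re_of_pos ht, abs_of_nonneg (heatTrace_nonneg lam t)]

lemma integrableOn_rpow_mul_exp_neg {s c : ℝ} (hs : 0 < s) (hc : 0 < c) :
    IntegrableOn (fun t ↦ t ^ (s - 1) * Real.exp (-(c * t))) (Ioi 0) := by
  refine Integrable.of_integral_ne_zero ?_
  rw [Real.integral_rpow_mul_exp_neg_mul_Ioi hs hc]
  have := Real.Gamma_pos_of_pos hs
  positivity

-- Integrating `t ^ (s - 1)` against a partial sum of the heat trace gives `Γ s` times a partial sum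
-- of the Dirichlet series, so these partial sums are bounded.
lemma summable_one_div_rpow_of_mellinConvergent_heatTrace (hlam : ∀ j, 0 < lam j)
    (hsum : ∀ t : ℝ, 0 < t → Summable fun j ↦ Real.exp (-t * lam j))
    {z : ℂ} (hz : 0 < z.re) (hconv : MellinConvergent (fun t ↦ (heatTrace lam t : ℂ)) z) :
    Summable fun j ↦ 1 / lam j ^ z.re := by
  have hterm (j : ι) := integrableOn_rpow_mul_exp_neg hz (hlam j)
  refine summable_of_sum_le
    (c := (∫ t in Ioi 0, t ^ (z.re - 1) * heatTrace lam t) / Real.Gamma z.re)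
    (fun j ↦ one_div_nonneg.2 (Real.rpow_nonneg (hlam j).le _)) fun u ↦ ?_
  rw [le_div_iff₀ (Real.Gamma_pos_of_pos hz)]
  calc (∑ j ∈ u, 1 / lam j ^ z.re) * Real.Gamma z.re
      = ∫ t in Ioi 0, ∑ j ∈ u, t ^ (z.re - 1) * Real.exp (-(lam j * t)) := by
        rw [integral_finsetSum _ fun j _ ↦ hterm j, Finset.sum_mul]
        refine Finset.sum_congr rfl fun j _ ↦ ?_
        rw [Real.integral_rpow_mul_exp_neg_mul_Ioi hz (hlam j),
          Real.div_rpow zero_le_one (hlam j).le, Real.one_rpow]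
    _ ≤ ∫ t in Ioi 0, t ^ (z.re - 1) * heatTrace lam t := by
        refine setIntegral_mono_on (integrable_finsetSum _ fun j _ ↦ hterm j)
          (integrableOn_rpow_mul_heatTrace hconv) measurableSet_Ioi fun t ht ↦ ?_
        rw [← Finset.mul_sum]
        refine mul_le_mul_of_nonneg_left ?_ (Real.rpow_nonneg (le_of_lt ht) _)
        simpa only [heatTrace, neg_mul, mul_comm t] using
          (hsum t ht).sum_le_tsum u fun j _ ↦ (Real.exp_pos _).le

lemma summable_norm_cpow_neg_of_mellinConvergent_heatTrace (hlam : ∀ j, 0 < lam j)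
    (hsum : ∀ t : ℝ, 0 < t → Summable fun j ↦ Real.exp (-t * lam j))
    {z : ℂ} (hz : 0 < z.re) (hconv : MellinConvergent (fun t ↦ (heatTrace lam t : ℂ)) z) :
    Summable fun j ↦ ‖(lam j : ℂ) ^ (-z)‖ := by
  refine (summable_one_div_rpow_of_mellinConvergent_heatTrace hlam hsum hz hconv).congr fun j ↦ ?_
  rw [Complex.norm_cpow_eq_rpow_re_of_pos (hlam j), Complex.neg_re, Real.rpow_neg (hlam j).le,
    one_div]

theorem inv_Gamma_mul_mellin_heatTrace (hlam : ∀ j, 0 < lam j)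
    (hsum : ∀ t : ℝ, 0 < t → Summable fun j ↦ Real.exp (-t * lam j))
    {z : ℂ} (hz : 0 < z.re) (hconv : MellinConvergent (fun t ↦ (heatTrace lam t : ℂ)) z) :
    (Complex.Gamma z)⁻¹ * mellin (fun t ↦ (heatTrace lam t : ℂ)) z = ∑' j, (lam j : ℂ) ^ (-z) := by
  have : Countable ι := by
    have hsupp := (hsum 1 one_pos).countable_support
    rwa [Function.support_eq_univ fun j ↦ Real.exp_ne_zero _, countable_univ_iff] at hsupp
  have hmellin := hasSum_mellin (a := fun _ : ι ↦ 1) (F := fun t ↦ (heatTrace lam t : ℂ))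
    (fun j ↦ Or.inr (hlam j)) hz
    (fun t ht ↦ by
      simpa only [one_mul, heatTrace, neg_mul, mul_comm t]
        using Complex.hasSum_ofReal.2 (hsum t ht).hasSum)
    (by simpa using summable_one_div_rpow_of_mellinConvergent_heatTrace hlam hsum hz hconv)
  rw [← hmellin.tsum_eq, ← tsum_mul_left]
  refine tsum_congr fun j ↦ ?_
  rw [mul_one, mul_div, inv_mul_cancel₀ (Complex.Gamma_ne_zero_of_re_pos hz), Complex.cpow_neg,
    one_div]

end Positive

/-- The spectral zeta function of an operator with eigenvalues `lam`, which is defined by the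
positive ones. -/
noncomputable def spectralZeta (lam : ι → ℝ) (z : ℂ) : ℂ :=
  ∑' j : {j // 0 < lam j}, (lam j : ℂ) ^ (-z)

/-- The contribution of the positive eigenvalues to the heat trace. -/
noncomputable def reducedHeatTrace (lam : ι → ℝ) : ℝ → ℝ :=
  heatTrace fun j : {j // 0 < lam j} ↦ lam j

lemma heatTrace_sub_card_eq_reducedHeatTrace {lam : ι → ℝ} (hlam : ∀ j, 0 ≤ lam j) {t : ℝ}
    (hsum : Summable fun j ↦ Real.exp (-t * lam j)) :
    heatTrace lam t - Nat.card {j | lam j = 0} = reducedHeatTrace lam t := by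
  have hcompl : {j | 0 < lam j}ᶜ = {j | lam j = 0} := by
    ext j
    exact not_lt.trans (hlam j).ge_iff_eq'
  have hker : ∑' j : {j | lam j = 0}, Real.exp (-t * lam j) = Nat.card {j | lam j = 0} := by
    have hone (j : {j | lam j = 0}) : Real.exp (-t * lam j) = 1 := by
      rw [show lam j = 0 from j.2, mul_zero, Real.exp_zero]
    simp only [hone, tsum_const, nsmul_eq_mul, mul_one]
  rw [← hker, ← hcompl, sub_eq_iff_eq_add, heatTrace]
  exact (hsum.tsum_subtype_add_tsum_subtype_compl {j | 0 < lam j}).symm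

end HeatTrace

theorem stmt_6_general {ι : Type*} {lam : ι → ℝ} (hlam : ∀ j, 0 ≤ lam j)
    (hsum : ∀ t : ℝ, 0 < t → Summable fun j ↦ Real.exp (-t * lam j))
    {α a a' : ℕ → ℝ} (hα : StrictMono α) (hα_top : Tendsto α atTop atTop) {n : ℕ} (hn : α n = 0)
    (hexp : HasPowerExpansion (heatTrace lam) α a)
    (ha' : ∀ j, j ≠ n → a' j = a j) (ha'n : a' n = a n - Nat.card {j | lam j = 0}) :
    (∀ z : ℂ, -α 0 < z.re → Summable fun j : {j // 0 < lam j} ↦ ‖(lam j : ℂ) ^ (-z)‖) ∧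
    (∀ z : ℂ, -α 0 < z.re → DifferentiableAt ℂ (spectralZeta lam) z) ∧
    ∃ F : ℂ → ℂ,
      (∀ z : ℂ, (∀ j, z ≠ -α j) → DifferentiableAt ℂ F z) ∧
      (∀ z : ℂ, -α 0 < z.re → F z = spectralZeta lam z) ∧
      (∀ j, Tendsto (fun z : ℂ ↦ (z + α j) * F z) (nhdsWithin (-α j) {(-α j : ℂ)}ᶜ)
        (nhds ((Complex.Gamma (-α j))⁻¹ * a' j))) ∧
      (∀ l m : ℕ, α m = l → AnalyticAt ℂ
        (Function.update F (-l) ((-1) ^ l * l.factorial * a' m)) (-l)) := by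
  have hexp' : HasPowerExpansion (reducedHeatTrace lam) α a' :=
    (hexp.sub_const hα.monotone hn ha' ha'n).congr' fun t ht ↦
      heatTrace_sub_card_eq_reducedHeatTrace hlam (hsum t ht)
  have hsum' (t : ℝ) (ht : 0 < t) := (hsum t ht).subtype {j | 0 < lam j}
  have hpos (j : {j // 0 < lam j}) : 0 < lam j := j.2
  have hcont := mellinContinuable_heatTrace hpos hsum' hexp'
  have hre {z : ℂ} (hz : -α 0 < z.re) : 0 < z.re :=
    (neg_nonneg.2 (hn ▸ hα.monotone n.zero_le)).trans_lt hz
  set F := zetaContinuation (fun t ↦ (reducedHeatTrace lam t : ℂ)) α (fun j ↦ (a' j : ℂ))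
  have hF {z : ℂ} (hz : -α 0 < z.re) : F z = spectralZeta lam z := by
    rw [spectralZeta, ← inv_Gamma_mul_mellin_heatTrace hpos hsum' (hre hz)
      (hcont.mellinConvergent hz), ← hcont.mellinContinuation_eq_mellin hα.monotone hz]
    rfl
  refine ⟨fun z hz ↦ summable_norm_cpow_neg_of_mellinConvergent_heatTrace hpos hsum' (hre hz)
      (hcont.mellinConvergent hz), fun z hz ↦ ?_, F, fun z hz ↦ ?_, fun z ↦ hF,
    hcont.tendsto_add_smul_zetaContinuation hα,
    fun l m hl ↦ hcont.analyticAt_update_zetaContinuation_neg_nat hα hl⟩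
  · exact (hcont.differentiableAt_zetaContinuation hα.monotone hz (by simp)).congr_of_eventuallyEq
      ((eventually_lt_re hz).mono fun w hw ↦ (hF hw).symm)
  · obtain ⟨N, hN⟩ := (hα_top.eventually_gt_atTop (-z.re)).exists
    exact hcont.differentiableAt_zetaContinuation hα.monotone (neg_lt.1 hN) fun j _ ↦ hz j

section HeatExponent

variable {n r : ℕ}

/-- The exponents `(j - n) / r` in the heat expansion of an operator of Heisenberg order `r` in
homogeneous dimension `n`. -/
noncomputable def heatExponent (n r j : ℕ) : ℝ :=
  ((j : ℝ) - n) / r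

lemma heatExponent_self : heatExponent n r n = 0 := by
  simp [heatExponent]

lemma neg_heatExponent_zero : -heatExponent n r 0 = n / r := by
  simp [heatExponent, neg_div]

lemma ofReal_heatExponent (j : ℕ) : (heatExponent n r j : ℂ) = -(((n : ℂ) - j) / r) := by
  simp [heatExponent, ← neg_div]

lemma heatExponent_add_mul (hr : 0 < r) (l : ℕ) : heatExponent n r (n + r * l) = l := by
  simp [heatExponent, hr.ne']

lemma heatExponent_strictMono (hr : 0 < r) : StrictMono (heatExponent n r) := fun i j hij ↦ by
  unfold heatExponent
  gcongr

lemma tendsto_heatExponent_atTop (hr : 0 < r) : Tendsto (heatExponent n r) atTop atTop :=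
  (tendsto_atTop_add_const_right _ (-(n : ℝ)) tendsto_natCast_atTop_atTop).atTop_div_const
    (mod_cast hr)

end HeatExponent

/-- Corollary 2.6: meromorphic continuation of the spectral zeta function
`ζ(z) = Σ_{λ_j > 0} λ_j^{-z}` of an eigenvalue sequence whose heat trace
`θ(t) = Σ_j e^{-t λ_j}` admits the asymptotic expansion `Σ_j a_j t^{(j-n)/r}` as
`t → 0⁺`; the continuation has at most simple poles at `(n-j)/r` with residues
`a'_j / Γ((n-j)/r)` (via the entire reciprocal Gamma function), and takes the values
`(-1)^l l! a'_{n+rl}` at `-l ∈ -ℕ₀`, where `a'_j = a_j` for `j ≠ n` and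
`a'_n = a_n - dim ker`. -/
theorem stmt_6 (n r : ℕ) (hr : 1 ≤ r)
    (lam : ℕ → ℝ) (hlam : ∀ j, 0 ≤ lam j)
    (hsum : ∀ t : ℝ, 0 < t → Summable fun j => Real.exp (-t * lam j))
    (a : ℕ → ℝ)
    (hasym : ∀ N : ℕ, ∃ CN : ℝ, 0 ≤ CN ∧ ∀ t ∈ Set.Ioc (0 : ℝ) 1,
      |(∑' j, Real.exp (-t * lam j))
          - ∑ j ∈ Finset.range N, a j * t ^ (((j : ℝ) - n) / r)|
        ≤ CN * t ^ (((N : ℝ) - n) / r))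
    (k : ℕ) (hkfin : {j : ℕ | lam j = 0}.Finite)
    (hk : Nat.card {j : ℕ | lam j = 0} = k)
    (a' : ℕ → ℝ) (ha' : ∀ j, j ≠ n → a' j = a j) (ha'n : a' n = a n - k) :
    (∀ z : ℂ, (n : ℝ) / r < z.re →
      Summable fun j : {j : ℕ // 0 < lam j} => ‖(lam j.1 : ℂ) ^ (-z)‖) ∧
    (∀ z : ℂ, (n : ℝ) / r < z.re → DifferentiableAt ℂ
      (fun z : ℂ => ∑' j : {j : ℕ // 0 < lam j}, (lam j.1 : ℂ) ^ (-z)) z) ∧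
    ∃ F : ℂ → ℂ,
      (∀ z : ℂ, (∀ j : ℕ, z ≠ ((n : ℂ) - j) / r) → DifferentiableAt ℂ F z) ∧
      (∀ z : ℂ, (n : ℝ) / r < z.re →
        F z = ∑' j : {j : ℕ // 0 < lam j}, (lam j.1 : ℂ) ^ (-z)) ∧
      (∀ j : ℕ, Tendsto (fun z : ℂ => (z - ((n : ℂ) - j) / r) * F z)
        (nhdsWithin (((n : ℂ) - j) / r) {((n : ℂ) - j) / r}ᶜ)
        (nhds ((Complex.Gamma (((n : ℂ) - j) / r))⁻¹ * (a' j : ℂ)))) ∧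
      (∀ l : ℕ, AnalyticAt ℂ
        (Function.update F (-(l : ℂ))
          ((-1 : ℂ) ^ l * (l.factorial : ℂ) * (a' (n + r * l) : ℂ)))
        (-(l : ℂ))) := by
  have hexp : HasPowerExpansion (heatTrace lam) (heatExponent n r) a := .of_norm_le fun N ↦ by
    obtain ⟨C, -, hC⟩ := hasym N
    exact ⟨C, by simpa only [heatTrace, heatExponent, smul_eq_mul, mul_comm _ (a _),
      Real.norm_eq_abs] using hC⟩
  obtain ⟨hsummable, hdiff, F, hF_diff, hF_eq, hF_res, hF_val⟩ :=
    stmt_6_general hlam hsum (heatExponent_strictMono hr) (tendsto_heatExponent_atTop hr)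
      heatExponent_self hexp ha' (hk ▸ ha'n)
  simp only [neg_heatExponent_zero, ofReal_heatExponent, neg_neg, ← sub_eq_add_neg]
    at hsummable hdiff hF_diff hF_eq hF_res
  exact ⟨hsummable, hdiff, F, hF_diff, hF_eq, hF_res,
    fun l ↦ hF_val l _ (heatExponent_add_mul hr l)⟩
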